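/- (Bound on the measure-perturbation term of the entropy gradient.) Let y₁,…,y_n ∈ ℝ^d with second moment m₂ = (1/n)Σ_i‖y_i‖², let φ₁,…,φ_n ∈ ℝ^d, let t ≥ 0, and set z_j = y_j + t φ_j for each j. Let N_y and N_z denote the entropy gradient fields associated with (y₁,…,y_n) and (z₁,…,z_n). Then (1/n) Σ_{j=1}^n ‖N_z(z_j) − N_y(z_j)‖ · ‖φ_j‖ ≤ (√n/ε² + √(n m₂)/ε³ + n√m₂/ε³) · t · (1/n) Σ_{j=1}^n ‖φ_j‖². -/

import Mathlib

/-!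
Write `ψ i = z i - y i = t φ i`, and let `p θ`, `q θ` be the posterior probabilities (softmax
weights) of the components of the uniform Gaussian mixtures centred at `z` and at `y`. Since
`∇k_ε(x) = -x k_ε(x) / ε²`, the entropy gradient compares `θ` with its posterior mean, and
`N_z(w) - N_y(w) = ε⁻² 𝔼 [∑ p i • z i - ∑ q i • y i]` for `θ` Gaussian with centre `w`
(`entGrad_sub`). The difference of posterior means is `∑ p i • ψ i + ∑ (p i - q i) • y i`. The first
sum is at most `r = (∑ ‖ψ i‖²)^(1/2)`; by Cauchy-Schwarz over `j` it accounts for the term `√n / ε²`.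

For the second sum there are two regimes. If `r² ≥ 2 ε²`, the bound
`‖∑ (p i - q i) • y i‖ ≤ √2 (∑ ‖y i‖²)^(1/2)` is enough (`sum_weight_change_large`). If `r² ≤ 2 ε²`,
comparing the logarithmic with the arithmetic mean gives
`‖∑ (p i - q i) • y i‖² ≤ (∑ L i δ i²) (∑ L i ‖y i‖²)` with `L = (p + q) / 2` and
`δ i = ⟪θ - (y i + z i) / 2, ψ i⟫ / ε²`, which is the log-ratio of `p i` and `q i` up to a term not
depending on `i` (`norm_sum_sub_smul_sq_le`, `log_softWt_sub`). For `θ` Gaussian with centre `z j`: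

* `𝔼_j ∑ L i δ i² ≤ 2 r² / ε²` (`integral_weighted_logRatio_sq`). The kernel at `z j` times `p i` is
  at most the kernel at `z i`, and for `i ≠ j` the kernel at `z j` times `q i` is at most a Gaussian
  centred near the midpoint of `y i` and `y j`, damped by the distance between these points; the
  damping absorbs the large values of `δ i`.
* `∑ j, 𝔼_j ∑ L i ‖y i‖² ≤ (n + 1) / 2 * ∑ ‖y i‖²` (`sum_integral_weighted_le`), because the averages
  `𝔼_j p i` form a doubly stochastic matrix and `q i ≤ 1`.

The arithmetic-geometric mean inequality, weighted to balance these two bounds, yields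
`(1 + √n) (∑ ‖y i‖²)^(1/2) r² / ε³` for the second sum, and with `∑ ‖y i‖² = n m₂` this is the sum of
the remaining two terms.
-/

open MeasureTheory Real

/-- The normalized Gaussian kernel on `ℝ^d` with covariance `ε² I_d`. -/
noncomputable def kG (d : ℕ) (ε : ℝ) (x : EuclideanSpace ℝ (Fin d)) : ℝ :=
  (2 * π * ε ^ 2) ^ (-(d : ℝ) / 2) * Real.exp (-‖x‖ ^ 2 / (2 * ε ^ 2))

/-- Gradient of the Gaussian kernel: `∇k_ε(x) = -(x/ε²) k_ε(x)`. -/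
noncomputable def nablaKG (d : ℕ) (ε : ℝ) (x : EuclideanSpace ℝ (Fin d)) :
    EuclideanSpace ℝ (Fin d) :=
  (-(1 / ε ^ 2) * kG d ε x) • x

/-- The entropy gradient field associated with the points `ys`:
`N_y(w) = ∫ k_ε(θ - w) (Σᵢ ∇k_ε(θ - yᵢ))/(Σᵢ k_ε(θ - yᵢ)) dθ`. -/
noncomputable def entGrad (d : ℕ) (ε : ℝ) {n : ℕ} (ys : Fin n → EuclideanSpace ℝ (Fin d))
    (w : EuclideanSpace ℝ (Fin d)) : EuclideanSpace ℝ (Fin d) :=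
  ∫ θ, ((∑ i, kG d ε (θ - ys i))⁻¹ * kG d ε (θ - w)) • (∑ i, nablaKG d ε (θ - ys i))

/-! ### Gaussian moments -/

theorem kG_pos (d : ℕ) {ε : ℝ} (hε : 0 < ε) (x : EuclideanSpace ℝ (Fin d)) : 0 < kG d ε x := by
  have := Real.pi_pos
  unfold kG
  positivity

theorem kG_continuous (d : ℕ) (ε : ℝ) : Continuous (kG d ε) := by
  unfold kG
  fun_prop

theorem kG_eq (d : ℕ) (ε : ℝ) (x : EuclideanSpace ℝ (Fin d)) :
    kG d ε x = (2 * π * ε ^ 2) ^ (-(d : ℝ) / 2) * Real.exp (-(1 / (2 * ε ^ 2)) * ‖x‖ ^ 2) := by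
  unfold kG
  congr 2
  ring

theorem integrable_exp_neg_mul_norm_sq (d : ℕ) {b : ℝ} (hb : 0 < b) :
    Integrable (fun x : EuclideanSpace ℝ (Fin d) => Real.exp (-b * ‖x‖ ^ 2)) := by
  apply MeasureTheory.Integrable.of_integral_ne_zero
  rw [GaussianFourier.integral_rexp_neg_mul_sq_norm hb]
  have := Real.pi_pos
  positivity

theorem kG_integrable (d : ℕ) {ε : ℝ} (hε : 0 < ε) : Integrable (kG d ε) := by
  have h := (integrable_exp_neg_mul_norm_sq d (b := 1 / (2 * ε ^ 2)) (by positivity)).const_mul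
    ((2 * π * ε ^ 2) ^ (-(d : ℝ) / 2))
  exact h.congr (Filter.Eventually.of_forall fun x => (kG_eq d ε x).symm)

theorem integral_kG (d : ℕ) {ε : ℝ} (hε : 0 < ε) : ∫ x, kG d ε x = 1 := by
  have hp := Real.pi_pos
  simp_rw [kG_eq]
  rw [integral_const_mul, GaussianFourier.integral_rexp_neg_mul_sq_norm (by positivity)]
  rw [finrank_euclideanSpace_fin, show π / (1 / (2 * ε ^ 2)) = 2 * π * ε ^ 2 by field_simp,
    ← Real.rpow_add (by positivity)]
  rw [show -(d : ℝ) / 2 + (d : ℝ) / 2 = 0 by ring, Real.rpow_zero]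

theorem kG_sq_integrable (d : ℕ) {ε : ℝ} (hε : 0 < ε) :
    Integrable (fun x : EuclideanSpace ℝ (Fin d) => kG d ε x * ‖x‖ ^ 2) := by
  have hp := Real.pi_pos
  set b : ℝ := 1 / (4 * ε ^ 2) with hb
  have hb0 : 0 < b := by positivity
  have h := (integrable_exp_neg_mul_norm_sq d hb0).const_mul
    ((2 * π * ε ^ 2) ^ (-(d : ℝ) / 2) * (1 / b))
  refine h.mono' ((kG_continuous d ε).mul (by fun_prop)).aestronglyMeasurable
    (Filter.Eventually.of_forall fun x => ?_)
  rw [Real.norm_of_nonneg (mul_nonneg (kG_pos d hε x).le (by positivity)), kG_eq]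
  have e1 : Real.exp (-(1 / (2 * ε ^ 2)) * ‖x‖ ^ 2)
      = Real.exp (-b * ‖x‖ ^ 2) * Real.exp (-(b * ‖x‖ ^ 2)) := by
    rw [← Real.exp_add]
    congr 1
    rw [hb]
    field_simp
    ring
  have e2 : Real.exp (-(b * ‖x‖ ^ 2)) * ‖x‖ ^ 2 ≤ 1 / b := by
    rw [Real.exp_neg, inv_mul_le_iff₀ (Real.exp_pos _), mul_one_div, le_div_iff₀ hb0]
    linarith [Real.add_one_le_exp (b * ‖x‖ ^ 2)]
  rw [e1]
  have hC : 0 < (2 * π * ε ^ 2) ^ (-(d : ℝ) / 2) := by positivity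
  have hE := Real.exp_pos (-b * ‖x‖ ^ 2)
  calc _ = ((2 * π * ε ^ 2) ^ (-(d : ℝ) / 2) * Real.exp (-b * ‖x‖ ^ 2)) *
        (Real.exp (-(b * ‖x‖ ^ 2)) * ‖x‖ ^ 2) := by ring
    _ ≤ ((2 * π * ε ^ 2) ^ (-(d : ℝ) / 2) * Real.exp (-b * ‖x‖ ^ 2)) * (1 / b) := by gcongr
    _ = _ := by ring

theorem kG_norm_integrable (d : ℕ) {ε : ℝ} (hε : 0 < ε) :
    Integrable (fun x : EuclideanSpace ℝ (Fin d) => kG d ε x * ‖x‖) := by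
  refine ((kG_integrable d hε).add (kG_sq_integrable d hε)).mono'
    ((kG_continuous d ε).mul (by fun_prop)).aestronglyMeasurable
    (Filter.Eventually.of_forall fun x => ?_)
  have h := kG_pos d hε x
  rw [Real.norm_of_nonneg (mul_nonneg h.le (norm_nonneg _)), Pi.add_apply]
  nlinarith [mul_nonneg h.le (sq_nonneg (‖x‖ - 1)), mul_nonneg h.le (sq_nonneg (‖x‖))]

theorem kG_inner_integrable (d : ℕ) {ε : ℝ} (hε : 0 < ε) (u : EuclideanSpace ℝ (Fin d)) :
    Integrable (fun x : EuclideanSpace ℝ (Fin d) => kG d ε x * inner ℝ x u) := by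
  refine ((kG_norm_integrable d hε).mul_const ‖u‖).mono'
    ((kG_continuous d ε).mul (by fun_prop)).aestronglyMeasurable
    (Filter.Eventually.of_forall fun x => ?_)
  have h := kG_pos d hε x
  rw [norm_mul, Real.norm_of_nonneg h.le, mul_assoc]
  gcongr
  exact norm_inner_le_norm x u

theorem kG_inner_sq_integrable (d : ℕ) {ε : ℝ} (hε : 0 < ε) (u : EuclideanSpace ℝ (Fin d)) :
    Integrable (fun x : EuclideanSpace ℝ (Fin d) => kG d ε x * (inner ℝ x u) ^ 2) := by
  refine ((kG_sq_integrable d hε).mul_const (‖u‖ ^ 2)).mono'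
    ((kG_continuous d ε).mul (by fun_prop)).aestronglyMeasurable
    (Filter.Eventually.of_forall fun x => ?_)
  have h := kG_pos d hε x
  rw [norm_mul, Real.norm_of_nonneg h.le, mul_assoc, norm_pow, ← mul_pow]
  gcongr
  exact norm_inner_le_norm x u

theorem integral_kG_inner (d : ℕ) (ε : ℝ) (u : EuclideanSpace ℝ (Fin d)) :
    ∫ x : EuclideanSpace ℝ (Fin d), kG d ε x * inner ℝ x u = 0 := by
  have h := integral_neg_eq_self
    (fun x : EuclideanSpace ℝ (Fin d) => kG d ε x * inner ℝ x u) volume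
  have h2 : ∀ x : EuclideanSpace ℝ (Fin d),
      kG d ε (-x) * inner ℝ (-x) u = -(kG d ε x * inner ℝ x u) := by
    intro x
    simp [kG]
  simp_rw [h2, integral_neg] at h
  linarith

theorem kG_hasFDerivAt (d : ℕ) {ε : ℝ} (hε : 0 < ε) (x : EuclideanSpace ℝ (Fin d)) :
    HasFDerivAt (kG d ε) ((-(1 / ε ^ 2) * kG d ε x) • innerSL ℝ x) x := by
  have h1 := (hasStrictFDerivAt_norm_sq x).hasFDerivAt
  have h2 := ((h1.const_mul (-(1 / (2 * ε ^ 2)))).exp).const_mul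
    ((2 * π * ε ^ 2) ^ (-(d : ℝ) / 2))
  rw [show kG d ε = fun y => (2 * π * ε ^ 2) ^ (-(d : ℝ) / 2) *
    Real.exp (-(1 / (2 * ε ^ 2)) * ‖y‖ ^ 2) from funext (kG_eq d ε)]
  convert! h2 using 1
  ext v
  simp
  field_simp

/-- The variance of a Gaussian marginal, by integration by parts in the direction `u`. -/
theorem integral_kG_inner_sq (d : ℕ) {ε : ℝ} (hε : 0 < ε) (u : EuclideanSpace ℝ (Fin d)) :
    ∫ x : EuclideanSpace ℝ (Fin d), kG d ε x * (inner ℝ x u) ^ 2 = ε ^ 2 * ‖u‖ ^ 2 := by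
  have hd (x : EuclideanSpace ℝ (Fin d)) :
      HasFDerivAt (fun x : EuclideanSpace ℝ (Fin d) => inner ℝ x u) (innerSL ℝ u) x := by
    simpa [real_inner_comm] using! (innerSL ℝ u).hasFDerivAt (x := x)
  have hf : ∀ x : EuclideanSpace ℝ (Fin d),
      fderiv ℝ (fun x : EuclideanSpace ℝ (Fin d) => inner ℝ x u) x u = ‖u‖ ^ 2 := by
    intro x
    rw [(hd x).fderiv]
    simp
  have hg : ∀ x : EuclideanSpace ℝ (Fin d),
      fderiv ℝ (kG d ε) x u = -(1 / ε ^ 2) * (kG d ε x * inner ℝ x u) := by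
    intro x
    rw [(kG_hasFDerivAt d hε x).fderiv]
    simp
    ring
  have key := integral_mul_fderiv_eq_neg_fderiv_mul_of_integrable (μ := volume) (𝕜 := ℝ)
    (f := fun x : EuclideanSpace ℝ (Fin d) => inner ℝ x u) (g := kG d ε) (v := u)
    (by simp_rw [hf]; exact (kG_integrable d hε).const_mul _)
    (by
      simp_rw [hg]
      refine ((kG_inner_sq_integrable d hε u).const_mul (-(1 / ε ^ 2))).congr
        (Filter.Eventually.of_forall fun x => ?_)
      ring)
    (by simpa [mul_comm] using kG_inner_integrable d hε u)
    (fun x _ => (hd x).differentiableAt) (fun x _ => (kG_hasFDerivAt d hε x).differentiableAt)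
  simp_rw [hf, hg] at key
  rw [integral_const_mul, integral_kG d hε] at key
  have e : ∀ x : EuclideanSpace ℝ (Fin d),
      inner ℝ x u * (-(1 / ε ^ 2) * (kG d ε x * inner ℝ x u))
        = -(1 / ε ^ 2) * (kG d ε x * (inner ℝ x u) ^ 2) := fun x => by ring
  simp_rw [e] at key
  rw [integral_const_mul] at key
  field_simp at key
  linarith

theorem kG_quad_integrable (d : ℕ) {ε : ℝ} (hε : 0 < ε) (c m u : EuclideanSpace ℝ (Fin d)) :
    Integrable (fun θ => kG d ε (θ - c) * (inner ℝ (θ - m) u) ^ 2) := by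
  have h := ((((kG_inner_sq_integrable d hε u).add
    ((kG_inner_integrable d hε u).const_mul (2 * inner ℝ (c - m) u))).add
    ((kG_integrable d hε).const_mul ((inner ℝ (c - m) u) ^ 2))).comp_sub_right c)
  refine h.congr (Filter.Eventually.of_forall fun θ => ?_)
  simp only [Pi.add_apply]
  rw [show θ - m = (θ - c) + (c - m) by abel, inner_add_left]
  ring

theorem integral_kG_quad (d : ℕ) {ε : ℝ} (hε : 0 < ε) (c m u : EuclideanSpace ℝ (Fin d)) :
    ∫ θ, kG d ε (θ - c) * (inner ℝ (θ - m) u) ^ 2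
      = ε ^ 2 * ‖u‖ ^ 2 + (inner ℝ (c - m) u) ^ 2 := by
  rw [← integral_add_right_eq_self _ c]
  have e : ∀ x : EuclideanSpace ℝ (Fin d),
      kG d ε (x + c - c) * (inner ℝ (x + c - m) u) ^ 2
        = (kG d ε x * (inner ℝ x u) ^ 2 + 2 * inner ℝ (c - m) u * (kG d ε x * inner ℝ x u))
          + (inner ℝ (c - m) u) ^ 2 * kG d ε x := by
    intro x
    rw [show x + c - m = x + (c - m) by abel, inner_add_left, add_sub_cancel_right]
    ring
  simp_rw [e]
  have i1 := kG_inner_sq_integrable d hε u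
  have i2 := (kG_inner_integrable d hε u).const_mul (2 * inner ℝ (c - m) u)
  have i3 := (kG_integrable d hε).const_mul ((inner ℝ (c - m) u) ^ 2)
  rw [integral_add (by exact i1.add i2) i3, integral_add i1 i2, integral_const_mul,
    integral_const_mul,
    integral_kG d hε, integral_kG_inner, integral_kG_inner_sq d hε]
  ring

/-! ### Perturbation of a finite probability vector -/

/-- The logarithmic mean is at most the arithmetic mean. -/
theorem sq_sub_div_mean_le {p q : ℝ} (hp : 0 < p) (hq : 0 < q) :
    (p - q) ^ 2 / ((p + q) / 2) ≤ (p - q) * (Real.log p - Real.log q) := by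
  wlog h : q ≤ p generalizing p q
  · have := this hq hp (le_of_not_ge h)
    rw [add_comm q p] at this
    rw [show (q - p) ^ 2 = (p - q) ^ 2 by ring] at this
    linarith
  have h1 := Real.le_log_one_add_of_nonneg (x := (p - q) / q) (by
    apply div_nonneg _ hq.le; linarith)
  have h2 : 1 + (p - q) / q = p / q := by field_simp; ring
  rw [h2, Real.log_div hp.ne' hq.ne'] at h1
  have h3 : 2 * ((p - q) / q) / ((p - q) / q + 2) = (p - q) / ((p + q) / 2) := by
    rw [show (p - q) / q + 2 = (p + q) / q by field_simp; ring]
    field_simp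
  rw [h3] at h1
  calc _ = (p - q) * ((p - q) / ((p + q) / 2)) := by ring
    _ ≤ _ := mul_le_mul_of_nonneg_left h1 (by linarith)

/-- If two probability vectors have log-ratios `δ i - κ`, the difference of the two averages of
`y` is controlled by the second moments of `δ` and of `y` under the mixture `(p + q) / 2`. -/
theorem norm_sum_sub_smul_sq_le {n : ℕ} {V : Type*} [NormedAddCommGroup V] [NormedSpace ℝ V]
    (p q δ : Fin n → ℝ) (κ : ℝ) (y : Fin n → V) (hp : ∀ i, 0 < p i) (hq : ∀ i, 0 < q i)
    (hp1 : ∑ i, p i = 1) (hq1 : ∑ i, q i = 1)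
    (h : ∀ i, Real.log (p i) - Real.log (q i) = δ i - κ) :
    ‖∑ i, (p i - q i) • y i‖ ^ 2 ≤
      (∑ i, (p i + q i) / 2 * δ i ^ 2) * (∑ i, (p i + q i) / 2 * ‖y i‖ ^ 2) := by
  have hL : ∀ i, 0 < (p i + q i) / 2 := fun i => by linarith [hp i, hq i]
  set X := ∑ i, (p i - q i) ^ 2 / ((p i + q i) / 2) with hX
  have hX0 : 0 ≤ X := Finset.sum_nonneg fun i _ => div_nonneg (sq_nonneg _) (hL i).le
  set G := ∑ i, (p i + q i) / 2 * δ i ^ 2 with hG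
  have hG0 : 0 ≤ G := Finset.sum_nonneg fun i _ => mul_nonneg (hL i).le (sq_nonneg _)
  -- The constant `κ` drops out because both vectors have total mass `1`.
  have h1 : X ≤ ∑ i, (p i - q i) * δ i := by
    calc X ≤ ∑ i, ((p i - q i) * δ i - (p i - q i) * κ) := by
          apply Finset.sum_le_sum
          intro i _
          have := sq_sub_div_mean_le (hp i) (hq i)
          rw [h i] at this
          linarith
      _ = _ := by
          rw [Finset.sum_sub_distrib, ← Finset.sum_mul, Finset.sum_sub_distrib, hp1, hq1]
          ring
  have h2 : (∑ i, (p i - q i) * δ i) ^ 2 ≤ X * G := by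
    apply Finset.sum_sq_le_sum_mul_sum_of_sq_le_mul
    · exact fun i _ => div_nonneg (sq_nonneg _) (hL i).le
    · exact fun i _ => mul_nonneg (hL i).le (sq_nonneg _)
    · intro i _
      have := (hL i).ne'
      apply le_of_eq
      rw [div_mul_eq_mul_div, eq_div_iff this]
      ring
  -- `X ^ 2 ≤ (∑ (p i - q i) δ i) ^ 2 ≤ X * G`, and `X` cancels.
  have h3 : X ≤ G := by
    by_contra hc
    push Not at hc
    have : X ^ 2 ≤ X * G := (pow_le_pow_left₀ hX0 h1 2).trans h2
    nlinarith
  have h4 : (∑ i, |p i - q i| * ‖y i‖) ^ 2 ≤ X * ∑ i, (p i + q i) / 2 * ‖y i‖ ^ 2 := by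
    apply Finset.sum_sq_le_sum_mul_sum_of_sq_le_mul
    · exact fun i _ => div_nonneg (sq_nonneg _) (hL i).le
    · exact fun i _ => mul_nonneg (hL i).le (sq_nonneg _)
    · intro i _
      have := (hL i).ne'
      apply le_of_eq
      rw [mul_pow, sq_abs, div_mul_eq_mul_div, eq_div_iff this]
      ring
  have h5 : ‖∑ i, (p i - q i) • y i‖ ≤ ∑ i, |p i - q i| * ‖y i‖ := by
    refine (norm_sum_le _ _).trans (Finset.sum_le_sum fun i _ => ?_)
    rw [norm_smul, Real.norm_eq_abs]
  calc _ ≤ (∑ i, |p i - q i| * ‖y i‖) ^ 2 := pow_le_pow_left₀ (norm_nonneg _) h5 2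
    _ ≤ _ := h4
    _ ≤ _ := mul_le_mul_of_nonneg_right h3
      (Finset.sum_nonneg fun i _ => mul_nonneg (hL i).le (sq_nonneg _))

theorem norm_sum_sub_smul_sq_le_two {n : ℕ} {V : Type*} [NormedAddCommGroup V] [NormedSpace ℝ V]
    (p q : Fin n → ℝ) (y : Fin n → V) (hp : ∀ i, 0 < p i) (hq : ∀ i, 0 < q i)
    (hp1 : ∑ i, p i = 1) (hq1 : ∑ i, q i = 1) :
    ‖∑ i, (p i - q i) • y i‖ ^ 2 ≤ 2 * ∑ i, ‖y i‖ ^ 2 := by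
  have h5 : ‖∑ i, (p i - q i) • y i‖ ≤ ∑ i, |p i - q i| * ‖y i‖ := by
    refine (norm_sum_le _ _).trans (Finset.sum_le_sum fun i _ => ?_)
    rw [norm_smul, Real.norm_eq_abs]
  have h6 : ∑ i, |p i - q i| ^ 2 ≤ 2 := by
    calc _ ≤ ∑ i, (p i + q i) := by
          apply Finset.sum_le_sum
          intro i _
          have a := Finset.single_le_sum (fun j _ => (hp j).le) (Finset.mem_univ i)
          have b := Finset.single_le_sum (fun j _ => (hq j).le) (Finset.mem_univ i)
          rw [hp1] at a
          rw [hq1] at b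
          rw [sq_abs]
          nlinarith [hp i, hq i, mul_pos (hp i) (hq i)]
      _ = 2 := by rw [Finset.sum_add_distrib, hp1, hq1]; norm_num
  calc _ ≤ (∑ i, |p i - q i| * ‖y i‖) ^ 2 := pow_le_pow_left₀ (norm_nonneg _) h5 2
    _ ≤ _ := Finset.sum_mul_sq_le_sq_mul_sq _ _ _
    _ ≤ _ := mul_le_mul_of_nonneg_right h6 (Finset.sum_nonneg fun i _ => sq_nonneg _)

/-! ### Softmax weights -/

/-- The posterior probability that `θ` was emitted by the `i`-th component of the uniform mixture
of the Gaussians centred at the points `ys`. -/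
noncomputable def softWt (d : ℕ) (ε : ℝ) {n : ℕ} (ys : Fin n → EuclideanSpace ℝ (Fin d))
    (θ : EuclideanSpace ℝ (Fin d)) (i : Fin n) : ℝ :=
  kG d ε (θ - ys i) / ∑ l, kG d ε (θ - ys l)

section

variable {d : ℕ} {ε : ℝ} {n : ℕ}

theorem sum_kG_pos (hε : 0 < ε) (hn : 1 ≤ n) (ys : Fin n → EuclideanSpace ℝ (Fin d))
    (θ : EuclideanSpace ℝ (Fin d)) : 0 < ∑ l, kG d ε (θ - ys l) :=
  Finset.sum_pos (fun _ _ => kG_pos d hε _) ⟨⟨0, hn⟩, Finset.mem_univ _⟩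

theorem softWt_pos (hε : 0 < ε) (hn : 1 ≤ n) (ys : Fin n → EuclideanSpace ℝ (Fin d))
    (θ : EuclideanSpace ℝ (Fin d)) (i : Fin n) : 0 < softWt d ε ys θ i :=
  div_pos (kG_pos d hε _) (sum_kG_pos hε hn ys θ)

theorem sum_softWt (hε : 0 < ε) (hn : 1 ≤ n) (ys : Fin n → EuclideanSpace ℝ (Fin d))
    (θ : EuclideanSpace ℝ (Fin d)) : ∑ i, softWt d ε ys θ i = 1 := by
  unfold softWt
  rw [← Finset.sum_div, div_self (sum_kG_pos hε hn ys θ).ne']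

theorem softWt_le_one (hε : 0 < ε) (hn : 1 ≤ n) (ys : Fin n → EuclideanSpace ℝ (Fin d))
    (θ : EuclideanSpace ℝ (Fin d)) (i : Fin n) : softWt d ε ys θ i ≤ 1 := by
  rw [← sum_softWt hε hn ys θ]
  exact Finset.single_le_sum (fun j _ => (softWt_pos hε hn ys θ j).le) (Finset.mem_univ i)

theorem softWt_continuous (hε : 0 < ε) (hn : 1 ≤ n) (ys : Fin n → EuclideanSpace ℝ (Fin d))
    (i : Fin n) : Continuous (fun θ => softWt d ε ys θ i) := by
  have h := kG_continuous d ε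
  unfold softWt
  exact Continuous.div (by fun_prop) (by fun_prop) fun θ => (sum_kG_pos hε hn ys θ).ne'

theorem kG_mul_softWt_comm (ys : Fin n → EuclideanSpace ℝ (Fin d))
    (θ : EuclideanSpace ℝ (Fin d)) (i j : Fin n) :
    kG d ε (θ - ys j) * softWt d ε ys θ i = kG d ε (θ - ys i) * softWt d ε ys θ j := by
  unfold softWt
  ring

/-- The log-ratio of the weights before and after moving `ys` to `ys + ψ` is, up to a term not
depending on the index, linear in `θ` and centred at the midpoint of the displacement. -/
theorem log_softWt_sub (hε : 0 < ε) (hn : 1 ≤ n) (ys ψ : Fin n → EuclideanSpace ℝ (Fin d))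
    (θ : EuclideanSpace ℝ (Fin d)) (i : Fin n) :
    Real.log (softWt d ε (fun j => ys j + ψ j) θ i) - Real.log (softWt d ε ys θ i)
      = inner ℝ (θ - (ys i + (1 / 2 : ℝ) • ψ i)) (ψ i) / ε ^ 2
        - (Real.log (∑ l, kG d ε (θ - (ys l + ψ l))) - Real.log (∑ l, kG d ε (θ - ys l))) := by
  have hp := Real.pi_pos
  have hlog : ∀ x, Real.log (kG d ε x)
      = Real.log ((2 * π * ε ^ 2) ^ (-(d : ℝ) / 2)) - ‖x‖ ^ 2 / (2 * ε ^ 2) := by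
    intro x
    unfold kG
    rw [Real.log_mul (by positivity) (Real.exp_pos _).ne', Real.log_exp]
    ring
  have key : ‖θ - (ys i + ψ i)‖ ^ 2 = ‖θ - ys i‖ ^ 2
      - 2 * inner ℝ (θ - (ys i + (1 / 2 : ℝ) • ψ i)) (ψ i) := by
    rw [← sub_sub, norm_sub_sq_real, ← sub_sub, inner_sub_left (θ - ys i) _ (ψ i), real_inner_smul_left,
      real_inner_self_eq_norm_sq]
    ring
  unfold softWt
  rw [Real.log_div (kG_pos d hε _).ne' (sum_kG_pos hε hn _ θ).ne',
    Real.log_div (kG_pos d hε _).ne' (sum_kG_pos hε hn _ θ).ne', hlog, hlog, key]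
  field_simp
  ring

theorem kG_mul_softWt_le (hε : 0 < ε) (hn : 1 ≤ n) (ys : Fin n → EuclideanSpace ℝ (Fin d))
    (θ : EuclideanSpace ℝ (Fin d)) (i j : Fin n) :
    kG d ε (θ - ys j) * softWt d ε ys θ i ≤ kG d ε (θ - ys i) := by
  rw [kG_mul_softWt_comm]
  exact mul_le_of_le_one_right (kG_pos d hε _).le (softWt_le_one hε hn ys θ j)

/-- For `i ≠ j`, the weight of `i` is at most half the square root of the likelihood ratio of `i`
to `j`, so multiplying it by a Gaussian centred near `ys j` gives at most a Gaussian centred near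
the midpoint, damped by the distance between the two points. -/
theorem kG_mul_softWt_le_exp (hε : 0 < ε) (ys : Fin n → EuclideanSpace ℝ (Fin d))
    (θ v : EuclideanSpace ℝ (Fin d)) {i j : Fin n} (hij : i ≠ j) :
    kG d ε (θ - (ys j + v)) * softWt d ε ys θ i ≤
      1 / 2 * Real.exp (‖v‖ ^ 2 / (2 * ε ^ 2) - ‖ys j + (2 : ℝ) • v - ys i‖ ^ 2 / (8 * ε ^ 2)) *
        kG d ε (θ - (ys i + (1 / 2 : ℝ) • (ys j + (2 : ℝ) • v - ys i))) := by
  have hp := Real.pi_pos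
  set C : ℝ := (2 * π * ε ^ 2) ^ (-(d : ℝ) / 2) with hC
  have hC0 : 0 < C := by positivity
  have hk : ∀ x, kG d ε x = C * Real.exp (-‖x‖ ^ 2 / (2 * ε ^ 2)) := fun x => rfl
  set A := ‖θ - ys i‖ ^ 2 / (2 * ε ^ 2) with hA
  set B := ‖θ - ys j‖ ^ 2 / (2 * ε ^ 2) with hB
  have hki : kG d ε (θ - ys i) = C * Real.exp (-A) := by rw [hk, neg_div]
  have hkj : kG d ε (θ - ys j) = C * Real.exp (-B) := by rw [hk, neg_div]
  have h2 : 2 * Real.exp (-((A + B) / 2)) ≤ Real.exp (-A) + Real.exp (-B) := by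
    have e1 : Real.exp (-A) = Real.exp (-A / 2) ^ 2 := by
      rw [← Real.exp_nat_mul]
      congr 1
      push_cast
      ring
    have e2 : Real.exp (-B) = Real.exp (-B / 2) ^ 2 := by
      rw [← Real.exp_nat_mul]
      congr 1
      push_cast
      ring
    have e3 : Real.exp (-((A + B) / 2)) = Real.exp (-A / 2) * Real.exp (-B / 2) := by
      rw [← Real.exp_add]; congr 1; ring
    rw [e1, e2, e3]
    nlinarith [sq_nonneg (Real.exp (-A / 2) - Real.exp (-B / 2))]
  have hS : 2 * C * Real.exp (-((A + B) / 2)) ≤ ∑ l, kG d ε (θ - ys l) := by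
    have h := Finset.sum_le_sum_of_subset_of_nonneg (Finset.subset_univ {i, j})
      (fun l _ _ => (kG_pos d hε (θ - ys l)).le)
    rw [Finset.sum_pair hij, hki, hkj] at h
    nlinarith
  have hw : softWt d ε ys θ i ≤ 1 / 2 * Real.exp ((B - A) / 2) := by
    have hS0 : 0 < 2 * C * Real.exp (-((A + B) / 2)) := by positivity
    unfold softWt
    rw [div_le_iff₀ (hS0.trans_le hS), hki]
    calc C * Real.exp (-A) = 1 / 2 * Real.exp ((B - A) / 2) *
          (2 * C * Real.exp (-((A + B) / 2))) := by
          rw [show -A = (B - A) / 2 + -((A + B) / 2) by ring, Real.exp_add]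
          ring_nf
      _ ≤ _ := by gcongr
  refine (mul_le_mul_of_nonneg_left hw (kG_pos d hε _).le).trans (le_of_eq ?_)
  rw [hk, hk]
  -- Completing the square.
  have e : -‖θ - (ys j + v)‖ ^ 2 / (2 * ε ^ 2) + (B - A) / 2 =
      (‖v‖ ^ 2 / (2 * ε ^ 2) - ‖ys j + (2 : ℝ) • v - ys i‖ ^ 2 / (8 * ε ^ 2)) +
      -‖θ - (ys i + (1 / 2 : ℝ) • (ys j + (2 : ℝ) • v - ys i))‖ ^ 2 / (2 * ε ^ 2) := by
    rw [hA, hB]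
    generalize ys i = a
    generalize ys j = b
    field_simp
    simp only [← real_inner_self_eq_norm_sq, inner_sub_left, inner_sub_right, inner_add_left,
      inner_add_right, real_inner_smul_left, real_inner_smul_right]
    rw [real_inner_comm θ a, real_inner_comm θ b, real_inner_comm θ v, real_inner_comm a b,
      real_inner_comm a v, real_inner_comm b v]
    ring
  calc _ = 1 / 2 * C * (Real.exp (-‖θ - (ys j + v)‖ ^ 2 / (2 * ε ^ 2)) *
        Real.exp ((B - A) / 2)) := by ring
    _ = _ := by
      rw [← Real.exp_add, e, Real.exp_add]
      ring

theorem kG_smul_integrable {F : Type*} [NormedAddCommGroup F] [NormedSpace ℝ F]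
    [SecondCountableTopologyEither (EuclideanSpace ℝ (Fin d)) F] (hε : 0 < ε)
    (w : EuclideanSpace ℝ (Fin d)) {f : EuclideanSpace ℝ (Fin d) → F} (hf : Continuous f)
    {C : ℝ} (hC : ∀ θ, ‖f θ‖ ≤ C) : Integrable (fun θ => kG d ε (θ - w) • f θ) := by
  have hk := kG_continuous d ε
  refine (((kG_integrable d hε).comp_sub_right w).mul_const C).mono'
    (by fun_prop : Continuous fun θ => kG d ε (θ - w) • f θ).aestronglyMeasurable
    (Filter.Eventually.of_forall fun θ => ?_)
  rw [norm_smul, Real.norm_of_nonneg (kG_pos d hε _).le]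
  exact mul_le_mul_of_nonneg_left (hC θ) (kG_pos d hε _).le

theorem integral_kG_sub (hε : 0 < ε) (w : EuclideanSpace ℝ (Fin d)) :
    ∫ θ, kG d ε (θ - w) = 1 := by
  rw [integral_sub_right_eq_self (kG d ε) w, integral_kG d hε]

theorem norm_sum_softWt_smul_le (hε : 0 < ε) (hn : 1 ≤ n)
    (ys v : Fin n → EuclideanSpace ℝ (Fin d)) {R : ℝ} (hv : ∀ i, ‖v i‖ ≤ R)
    (θ : EuclideanSpace ℝ (Fin d)) : ‖∑ i, softWt d ε ys θ i • v i‖ ≤ R := by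
  calc _ ≤ ∑ i, softWt d ε ys θ i * R := by
        refine (norm_sum_le _ _).trans (Finset.sum_le_sum fun i _ => ?_)
        have := softWt_pos hε hn ys θ i
        rw [norm_smul, Real.norm_of_nonneg this.le]
        gcongr
        exact hv i
    _ = R := by rw [← Finset.sum_mul, sum_softWt hε hn, one_mul]

theorem sum_softWt_smul_continuous (hε : 0 < ε) (hn : 1 ≤ n)
    (ys v : Fin n → EuclideanSpace ℝ (Fin d)) :
    Continuous fun θ => ∑ i, softWt d ε ys θ i • v i := by
  have h := softWt_continuous hε hn ys
  fun_prop

theorem kG_smul_self_integrable (hε : 0 < ε) (w : EuclideanSpace ℝ (Fin d)) :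
    Integrable (fun θ : EuclideanSpace ℝ (Fin d) => kG d ε (θ - w) • θ) := by
  have hk := kG_continuous d ε
  have h1 : Integrable (fun θ : EuclideanSpace ℝ (Fin d) => kG d ε θ • θ) := by
    refine (kG_norm_integrable d hε).mono' (by fun_prop : Continuous _).aestronglyMeasurable
      (Filter.Eventually.of_forall fun θ => ?_)
    rw [norm_smul, Real.norm_of_nonneg (kG_pos d hε _).le]
  have h2 := (h1.add ((kG_integrable d hε).smul_const w)).comp_sub_right w
  refine h2.congr (Filter.Eventually.of_forall fun θ => ?_)
  simp only [Pi.add_apply]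
  rw [← smul_add, sub_add_cancel]

/-- The entropy gradient compares `θ` with its posterior mean under the mixture. -/
theorem entGrad_integrand (hε : 0 < ε) (hn : 1 ≤ n) (ys : Fin n → EuclideanSpace ℝ (Fin d))
    (w θ : EuclideanSpace ℝ (Fin d)) :
    ((∑ i, kG d ε (θ - ys i))⁻¹ * kG d ε (θ - w)) • (∑ i, nablaKG d ε (θ - ys i)) =
      (1 / ε ^ 2) • (kG d ε (θ - w) • (∑ i, softWt d ε ys θ i • ys i) - kG d ε (θ - w) • θ) := by
  have hS := (sum_kG_pos hε hn ys θ).ne'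
  have h1 : ∑ i, nablaKG d ε (θ - ys i) = (1 / ε ^ 2 * ∑ l, kG d ε (θ - ys l)) •
      (∑ i, softWt d ε ys θ i • (ys i - θ)) := by
    rw [Finset.smul_sum]
    refine Finset.sum_congr rfl fun i _ => ?_
    unfold nablaKG softWt
    rw [smul_smul, ← neg_sub θ (ys i), smul_neg, ← neg_smul]
    congr 1
    field_simp
  have h2 : ∑ i, softWt d ε ys θ i • (ys i - θ) = (∑ i, softWt d ε ys θ i • ys i) - θ := by
    simp_rw [smul_sub]
    rw [Finset.sum_sub_distrib, ← Finset.sum_smul, sum_softWt hε hn, one_smul]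
  rw [h1, h2, smul_smul, ← smul_sub, smul_smul]
  congr 1
  field_simp

theorem entGrad_sub (hε : 0 < ε) (hn : 1 ≤ n) (ys zs : Fin n → EuclideanSpace ℝ (Fin d))
    (w : EuclideanSpace ℝ (Fin d)) :
    entGrad d ε zs w - entGrad d ε ys w = ∫ θ, (1 / ε ^ 2) •
      (kG d ε (θ - w) • ((∑ i, softWt d ε zs θ i • zs i) - ∑ i, softWt d ε ys θ i • ys i)) := by
  have hi : ∀ ys : Fin n → EuclideanSpace ℝ (Fin d), Integrable (fun θ => (1 / ε ^ 2) •
      (kG d ε (θ - w) • (∑ i, softWt d ε ys θ i • ys i) - kG d ε (θ - w) • θ)) := by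
    intro ys
    refine Integrable.smul (1 / ε ^ 2 : ℝ) (Integrable.sub ?_ (kG_smul_self_integrable hε w))
    exact kG_smul_integrable hε w (sum_softWt_smul_continuous hε hn ys ys)
      (norm_sum_softWt_smul_le hε hn ys ys
        (fun i => Finset.single_le_sum (f := fun i => ‖ys i‖) (fun j _ => norm_nonneg _)
          (Finset.mem_univ i)))
  unfold entGrad
  simp_rw [entGrad_integrand hε hn]
  rw [← integral_sub (hi zs) (hi ys)]
  congr 1
  ext1 θ
  rw [← smul_sub, sub_sub_sub_cancel_right, ← smul_sub]

end

/-! ### The displacement estimate -/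

/-- The numerical inequality behind the second-moment bound for `i ≠ j`: `α` and `β` are the squared
lengths of the `j`-th and `i`-th displacements, and `u` the squared distance responsible for the
damping, all in units of the bandwidth. -/
theorem exp_quadratic_bound {α β u : ℝ} (hβ : 0 ≤ β) (hu : 0 ≤ u) (hα : 0 ≤ α)
    (h : α + β ≤ 2) :
    1 + β / 4 + 1 / 2 * Real.exp (α / 2 - u) * (1 + 4 * u + β / 2) ≤ 4 := by
  have h1 : Real.exp (-u) * (1 + 4 * u + β / 2) ≤ 2 + β / 2 := by
    rw [Real.exp_neg, inv_mul_le_iff₀ (Real.exp_pos _)]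
    nlinarith [Real.quadratic_le_exp_of_nonneg hu, sq_nonneg (u - 1), mul_nonneg hβ hu,
      mul_nonneg hβ (sq_nonneg u)]
  have h2 : Real.exp (α / 2) * (1 + β / 2) ≤ 2.7182818286 := by
    have a : Real.exp (α / 2) * Real.exp (β / 2) ≤ Real.exp 1 := by
      rw [← Real.exp_add]
      exact Real.exp_le_exp.mpr (by linarith)
    have b := Real.add_one_le_exp (β / 2)
    have c := Real.exp_one_lt_d9
    nlinarith [Real.exp_pos (α / 2)]
  have h3 : 1 / 2 * Real.exp (α / 2 - u) * (1 + 4 * u + β / 2)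
      ≤ Real.exp (α / 2) * (1 + β / 4) := by
    rw [sub_eq_add_neg, Real.exp_add]
    nlinarith [Real.exp_pos (α / 2)]
  have h4 : Real.exp (α / 2) * (1 + β / 4) ≤ 3 - β / 4 := by
    have : Real.exp (α / 2) ≤ 2.7182818286 / (1 + β / 2) := by
      rw [le_div_iff₀ (by linarith)]
      exact h2
    calc _ ≤ 2.7182818286 / (1 + β / 2) * (1 + β / 4) := by gcongr
      _ ≤ _ := by
        rw [div_mul_eq_mul_div, div_le_iff₀ (by linarith)]
        nlinarith
  linarith

section

variable {d : ℕ} {ε : ℝ} {n : ℕ}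

/-- Second moment of the log-ratio of the `i`-th weights under a Gaussian centred at the `j`-th
displaced point and the mean of the old and new weights, for small displacements. -/
theorem integral_weighted_logRatio_sq (hε : 0 < ε) (hn : 1 ≤ n)
    (ys ψ : Fin n → EuclideanSpace ℝ (Fin d)) (hr : ∑ i, ‖ψ i‖ ^ 2 ≤ 2 * ε ^ 2) (i j : Fin n) :
    Integrable (fun θ => kG d ε (θ - (ys j + ψ j)) *
      ((softWt d ε (fun l => ys l + ψ l) θ i + softWt d ε ys θ i) / 2 *
        (inner ℝ (θ - (ys i + (1 / 2 : ℝ) • ψ i)) (ψ i) / ε ^ 2) ^ 2)) ∧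
    ∫ θ, kG d ε (θ - (ys j + ψ j)) *
      ((softWt d ε (fun l => ys l + ψ l) θ i + softWt d ε ys θ i) / 2 *
        (inner ℝ (θ - (ys i + (1 / 2 : ℝ) • ψ i)) (ψ i) / ε ^ 2) ^ 2) ≤
      2 * ‖ψ i‖ ^ 2 / ε ^ 2 := by
  set m := ys i + (1 / 2 : ℝ) • ψ i with hm
  set b := ‖ψ i‖ ^ 2 with hb
  have hb0 : 0 ≤ b := sq_nonneg _
  have hkc := kG_continuous d ε
  have hzc := softWt_continuous hε hn (fun l => ys l + ψ l) i
  have hyc := softWt_continuous hε hn ys i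
  have hz0 := fun θ => softWt_pos hε hn (fun l => ys l + ψ l) θ i
  have hy0 := fun θ => softWt_pos hε hn ys θ i
  have hcont : Continuous (fun θ => kG d ε (θ - (ys j + ψ j)) *
      ((softWt d ε (fun l => ys l + ψ l) θ i + softWt d ε ys θ i) / 2 *
        (inner ℝ (θ - m) (ψ i) / ε ^ 2) ^ 2)) := by fun_prop
  have hnn : ∀ θ, 0 ≤ kG d ε (θ - (ys j + ψ j)) *
      ((softWt d ε (fun l => ys l + ψ l) θ i + softWt d ε ys θ i) / 2 *
        (inner ℝ (θ - m) (ψ i) / ε ^ 2) ^ 2) := by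
    intro θ
    have := kG_pos d hε (θ - (ys j + ψ j))
    have := hz0 θ
    have := hy0 θ
    positivity
  -- It suffices to dominate the weighted kernel by two shifted Gaussians.
  have main : ∀ (K : ℝ) (c : EuclideanSpace ℝ (Fin d)),
      (∀ θ, kG d ε (θ - (ys j + ψ j)) * softWt d ε ys θ i ≤ K * kG d ε (θ - c)) →
      (ε ^ 2 * b + b ^ 2 / 4) + K * (ε ^ 2 * b + (inner ℝ (c - m) (ψ i)) ^ 2)
        ≤ 4 * (ε ^ 2 * b) →
      Integrable (fun θ => kG d ε (θ - (ys j + ψ j)) *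
      ((softWt d ε (fun l => ys l + ψ l) θ i + softWt d ε ys θ i) / 2 *
        (inner ℝ (θ - m) (ψ i) / ε ^ 2) ^ 2)) ∧
      ∫ θ, kG d ε (θ - (ys j + ψ j)) *
        ((softWt d ε (fun l => ys l + ψ l) θ i + softWt d ε ys θ i) / 2 *
          (inner ℝ (θ - m) (ψ i) / ε ^ 2) ^ 2) ≤ 2 * b / ε ^ 2 := by
    intro K c hK hnum
    have i1 := kG_quad_integrable d hε (ys i + ψ i) m (ψ i)
    have i2 := (kG_quad_integrable d hε c m (ψ i)).const_mul K
    have i3 := (i1.add i2).const_mul (1 / (2 * ε ^ 4))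
    have hle : ∀ θ, kG d ε (θ - (ys j + ψ j)) *
        ((softWt d ε (fun l => ys l + ψ l) θ i + softWt d ε ys θ i) / 2 *
          (inner ℝ (θ - m) (ψ i) / ε ^ 2) ^ 2) ≤
        1 / (2 * ε ^ 4) * (kG d ε (θ - (ys i + ψ i)) * (inner ℝ (θ - m) (ψ i)) ^ 2 +
          K * (kG d ε (θ - c) * (inner ℝ (θ - m) (ψ i)) ^ 2)) := by
      intro θ
      have h1 := kG_mul_softWt_le hε hn (fun l => ys l + ψ l) θ i j
      have h2 := hK θ
      have h3 : 0 ≤ 1 / (2 * ε ^ 4) * (inner ℝ (θ - m) (ψ i)) ^ 2 := by positivity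
      calc _ = (1 / (2 * ε ^ 4) * (inner ℝ (θ - m) (ψ i)) ^ 2) *
            (kG d ε (θ - (ys j + ψ j)) * softWt d ε (fun l => ys l + ψ l) θ i +
             kG d ε (θ - (ys j + ψ j)) * softWt d ε ys θ i) := by
            field_simp
        _ ≤ (1 / (2 * ε ^ 4) * (inner ℝ (θ - m) (ψ i)) ^ 2) *
            (kG d ε (θ - (ys i + ψ i)) + K * kG d ε (θ - c)) :=
            mul_le_mul_of_nonneg_left (add_le_add h1 h2) h3
        _ = _ := by ring
    have hint := i3.mono' hcont.aestronglyMeasurable (Filter.Eventually.of_forall fun θ => by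
      rw [Real.norm_of_nonneg (hnn θ)]
      exact hle θ)
    refine ⟨hint, (integral_mono hint i3 hle).trans ?_⟩
    have e1 : (inner ℝ (ys i + ψ i - m) (ψ i)) ^ 2 = b ^ 2 / 4 := by
      rw [hm, show ys i + ψ i - (ys i + (1 / 2 : ℝ) • ψ i) = (1 / 2 : ℝ) • ψ i by module,
        real_inner_smul_left, real_inner_self_eq_norm_sq]
      ring
    simp only [Pi.add_apply]
    rw [integral_const_mul, integral_add i1 i2, integral_const_mul, integral_kG_quad d hε,
      integral_kG_quad d hε, e1]
    calc _ ≤ 1 / (2 * ε ^ 4) * (4 * (ε ^ 2 * b)) := by gcongr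
      _ = _ := by field_simp; ring
  have hbr : b ≤ 2 * ε ^ 2 := (Finset.single_le_sum (f := fun i => ‖ψ i‖ ^ 2)
    (fun l _ => sq_nonneg _) (Finset.mem_univ i)).trans hr
  by_cases hij : i = j
  · subst hij
    refine main 1 (ys i + ψ i) (fun θ => ?_) ?_
    · rw [one_mul]
      exact mul_le_of_le_one_right (kG_pos d hε _).le (softWt_le_one hε hn ys θ i)
    · have e1 : (inner ℝ (ys i + ψ i - m) (ψ i)) ^ 2 = b ^ 2 / 4 := by
        rw [hm, show ys i + ψ i - (ys i + (1 / 2 : ℝ) • ψ i) = (1 / 2 : ℝ) • ψ i by module,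
          real_inner_smul_left, real_inner_self_eq_norm_sq]
        ring
      rw [e1]
      nlinarith
  · refine main _ _ (fun θ => kG_mul_softWt_le_exp hε ys θ (ψ j) hij) ?_
    set D := ys j + (2 : ℝ) • ψ j - ys i with hD
    have hab : ‖ψ j‖ ^ 2 + b ≤ 2 * ε ^ 2 := by
      have h := Finset.sum_le_sum_of_subset_of_nonneg (Finset.subset_univ {i, j})
        (fun l _ _ => sq_nonneg ‖ψ l‖)
      rw [Finset.sum_pair hij] at h
      linarith
    have hin : (inner ℝ (ys i + (1 / 2 : ℝ) • D - m) (ψ i)) ^ 2 ≤ b * (‖D‖ ^ 2 + b) / 2 := by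
      rw [hm, show ys i + (1 / 2 : ℝ) • D - (ys i + (1 / 2 : ℝ) • ψ i)
        = (1 / 2 : ℝ) • (D - ψ i) by module, real_inner_smul_left]
      have c1 : (inner ℝ (D - ψ i) (ψ i)) ^ 2 ≤ ‖D - ψ i‖ ^ 2 * b := by
        rw [hb, ← mul_pow, sq_le_sq, abs_of_nonneg (by positivity : 0 ≤ ‖D - ψ i‖ * ‖ψ i‖)]
        exact abs_real_inner_le_norm _ _
      have c2 : ‖D - ψ i‖ ^ 2 ≤ 2 * (‖D‖ ^ 2 + b) := by
        have := parallelogram_law_with_norm ℝ D (ψ i)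
        nlinarith [mul_self_nonneg ‖D + ψ i‖]
      nlinarith
    have hnum := exp_quadratic_bound (α := ‖ψ j‖ ^ 2 / ε ^ 2) (β := b / ε ^ 2)
      (u := ‖D‖ ^ 2 / (8 * ε ^ 2)) (by positivity) (by positivity) (by positivity)
      (by rw [← add_div, div_le_iff₀ (by positivity)]; exact hab)
    rw [show ‖ψ j‖ ^ 2 / ε ^ 2 / 2 = ‖ψ j‖ ^ 2 / (2 * ε ^ 2) by field_simp] at hnum
    set T := Real.exp (‖ψ j‖ ^ 2 / (2 * ε ^ 2) - ‖D‖ ^ 2 / (8 * ε ^ 2)) with hT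
    have hT0 : 0 < T := Real.exp_pos _
    have hs : 0 ≤ ε ^ 2 * b := by positivity
    calc _ ≤ (ε ^ 2 * b + b ^ 2 / 4) + 1 / 2 * T * (ε ^ 2 * b + b * (‖D‖ ^ 2 + b) / 2) := by
          gcongr
      _ = (ε ^ 2 * b) * (1 + b / ε ^ 2 / 4 + 1 / 2 * T *
          (1 + 4 * (‖D‖ ^ 2 / (8 * ε ^ 2)) + b / ε ^ 2 / 2)) := by
          field_simp
          ring
      _ ≤ (ε ^ 2 * b) * 4 := mul_le_mul_of_nonneg_left hnum hs
      _ = _ := by ring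

/-- The new weights form a doubly stochastic matrix after averaging, the old ones are at most `1`;
hence the factor `(n + 1) / 2`. -/
theorem sum_integral_weighted_le (hε : 0 < ε) (hn : 1 ≤ n)
    (ys zs : Fin n → EuclideanSpace ℝ (Fin d)) (i : Fin n) :
    ∑ j, ∫ θ, kG d ε (θ - zs j) * ((softWt d ε zs θ i + softWt d ε ys θ i) / 2) ≤
      ((n : ℝ) + 1) / 2 := by
  have hint : ∀ (xs : Fin n → EuclideanSpace ℝ (Fin d)) (i j : Fin n),
      Integrable (fun θ => kG d ε (θ - zs j) * softWt d ε xs θ i) := fun xs i j =>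
    kG_smul_integrable hε (zs j) (softWt_continuous hε hn xs i) (C := 1) fun θ => by
      rw [Real.norm_of_nonneg (softWt_pos hε hn xs θ i).le]
      exact softWt_le_one hε hn xs θ i
  have h1 : ∑ j, ∫ θ, kG d ε (θ - zs j) * softWt d ε zs θ i = 1 := by
    rw [← integral_finsetSum _ fun j _ => hint zs i j]
    simp_rw [fun θ j => kG_mul_softWt_comm (d := d) (ε := ε) zs θ i j, ← Finset.mul_sum,
      sum_softWt hε hn, mul_one]
    exact integral_kG_sub hε _
  have h2 : ∀ j, ∫ θ, kG d ε (θ - zs j) * softWt d ε ys θ i ≤ 1 := by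
    intro j
    rw [← integral_kG_sub hε (zs j)]
    refine integral_mono (hint ys i j) ((kG_integrable d hε).comp_sub_right _) fun θ => ?_
    exact mul_le_of_le_one_right (kG_pos d hε _).le (softWt_le_one hε hn ys θ i)
  have h3 : ∀ j, ∫ θ, kG d ε (θ - zs j) * ((softWt d ε zs θ i + softWt d ε ys θ i) / 2) =
      1 / 2 * ((∫ θ, kG d ε (θ - zs j) * softWt d ε zs θ i) +
        ∫ θ, kG d ε (θ - zs j) * softWt d ε ys θ i) := by
    intro j
    rw [← integral_add (hint zs i j) (hint ys i j), ← integral_const_mul]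
    congr 1
    ext1 θ
    ring
  simp_rw [h3]
  rw [← Finset.mul_sum, Finset.sum_add_distrib, h1]
  have h4 := Finset.sum_le_sum fun j (_ : j ∈ Finset.univ) => h2 j
  simp at h4
  simp
  linarith

theorem sum_norm_le_sqrt {V : Type*} [NormedAddCommGroup V] (ψ : Fin n → V) :
    ∑ j, ‖ψ j‖ ≤ Real.sqrt n * Real.sqrt (∑ j, ‖ψ j‖ ^ 2) := by
  rw [← Real.sqrt_mul (by positivity)]
  apply Real.le_sqrt_of_sq_le
  simpa using sq_sum_le_card_mul_sum_sq (s := Finset.univ) (f := fun j => ‖ψ j‖)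

theorem kG_mul_norm_integrable (hε : 0 < ε) (hn : 1 ≤ n)
    (ys zs v : Fin n → EuclideanSpace ℝ (Fin d)) (w : EuclideanSpace ℝ (Fin d)) :
    Integrable (fun θ => kG d ε (θ - w) *
      ‖∑ i, (softWt d ε zs θ i - softWt d ε ys θ i) • v i‖) := by
  have h1 := softWt_continuous hε hn ys
  have h2 := softWt_continuous hε hn zs
  have hc : Continuous fun θ => ‖∑ i, (softWt d ε zs θ i - softWt d ε ys θ i) • v i‖ :=
    (continuous_finsetSum _ fun i _ => ((h2 i).sub (h1 i)).smul continuous_const).norm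
  have hb : ∀ θ, ‖‖∑ i, (softWt d ε zs θ i - softWt d ε ys θ i) • v i‖‖ ≤
      Real.sqrt (2 * ∑ i, ‖v i‖ ^ 2) := fun θ => by
    rw [norm_norm]
    exact Real.le_sqrt_of_sq_le (norm_sum_sub_smul_sq_le_two (softWt d ε zs θ) (softWt d ε ys θ) v
      (softWt_pos hε hn zs θ) (softWt_pos hε hn ys θ) (sum_softWt hε hn zs θ)
      (sum_softWt hε hn ys θ))
  have h := kG_smul_integrable hε w hc hb
  simpa only [smul_eq_mul] using h

/-- The weighted arithmetic-geometric mean inequality. -/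
theorem mul_le_of_sq_le_mul {a β G H X : ℝ} (hβ : 0 < β) (ha : 0 ≤ a) (hG : 0 ≤ G)
    (hH : 0 ≤ H) (hX : 0 ≤ X) (h : X ^ 2 ≤ G * H) :
    a * X ≤ β * a ^ 2 / 2 * G + 1 / (2 * β) * H := by
  refine (sq_le_sq₀ (by positivity) (by positivity)).mp ?_
  have e : β * a ^ 2 / 2 * G * (1 / (2 * β) * H) = a ^ 2 * (G * H) / 4 := by
    field_simp
    ring
  nlinarith [sq_nonneg (β * a ^ 2 / 2 * G - 1 / (2 * β) * H),
    mul_le_mul_of_nonneg_left h (sq_nonneg a)]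

/-- For small displacements, the change of the weights moves the posterior mean by little on
average over the displaced points. -/
theorem sum_weight_change_small (hε : 0 < ε) (hn : 1 ≤ n)
    (ys ψ : Fin n → EuclideanSpace ℝ (Fin d)) (hr : ∑ i, ‖ψ i‖ ^ 2 ≤ 2 * ε ^ 2) :
    ∑ j, ‖ψ j‖ * ∫ θ, kG d ε (θ - (ys j + ψ j)) *
        ‖∑ i, (softWt d ε (fun l => ys l + ψ l) θ i - softWt d ε ys θ i) • ys i‖ ≤
      (1 + Real.sqrt n) * Real.sqrt (∑ i, ‖ys i‖ ^ 2) * (∑ i, ‖ψ i‖ ^ 2) / ε := by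
  set R := ∑ i, ‖ψ i‖ ^ 2 with hR
  set M := ∑ i, ‖ys i‖ ^ 2 with hM
  have hR0 : 0 ≤ R := Finset.sum_nonneg fun _ _ => sq_nonneg _
  have hM0 : 0 ≤ M := Finset.sum_nonneg fun _ _ => sq_nonneg _
  rcases hR0.eq_or_lt with h0 | hRpos
  · have hz : ∀ j, ‖ψ j‖ = 0 := by
      intro j
      have := (Finset.sum_eq_zero_iff_of_nonneg (fun i _ => sq_nonneg ‖ψ i‖)).mp h0.symm j
        (Finset.mem_univ j)
      simpa using this
    simp [hz, ← h0]
  rcases hM0.eq_or_lt with h0 | hMpos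
  · have hz : ∀ j, ys j = 0 := by
      intro j
      have := (Finset.sum_eq_zero_iff_of_nonneg (fun i _ => sq_nonneg ‖ys i‖)).mp h0.symm j
        (Finset.mem_univ j)
      simpa using this
    simp [hz, ← h0]
  set zs : Fin n → EuclideanSpace ℝ (Fin d) := fun l => ys l + ψ l with hzs
  set L : EuclideanSpace ℝ (Fin d) → Fin n → ℝ := fun θ i =>
    (softWt d ε zs θ i + softWt d ε ys θ i) / 2 with hL
  set δ : EuclideanSpace ℝ (Fin d) → Fin n → ℝ := fun θ i =>
    inner ℝ (θ - (ys i + (1 / 2 : ℝ) • ψ i)) (ψ i) / ε ^ 2 with hδ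
  -- The balance between the two factors in the Cauchy-Schwarz inequality, optimal up to
  -- replacing `√(n + 1)` by `1 + √n`.
  set β := Real.sqrt M * ε * (1 + Real.sqrt n) / (2 * R) with hβ
  have hsM : 0 < Real.sqrt M := Real.sqrt_pos.mpr hMpos
  have hβ0 : 0 < β := by positivity
  have hL0 : ∀ θ i, 0 ≤ L θ i := fun θ i => by
    have := softWt_pos hε hn zs θ i
    have := softWt_pos hε hn ys θ i
    simp only [hL]
    linarith
  have hAint : ∀ j, Integrable fun θ => kG d ε (θ - zs j) * ∑ i, L θ i * δ θ i ^ 2 := by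
    intro j
    simp_rw [Finset.mul_sum]
    exact integrable_finsetSum _ fun i _ => (integral_weighted_logRatio_sq hε hn ys ψ hr i j).1
  have hA : ∀ j, ∫ θ, kG d ε (θ - zs j) * ∑ i, L θ i * δ θ i ^ 2 ≤ 2 * R / ε ^ 2 := by
    intro j
    simp_rw [Finset.mul_sum]
    rw [integral_finsetSum _ fun i _ => (integral_weighted_logRatio_sq hε hn ys ψ hr i j).1]
    calc _ ≤ ∑ i, 2 * ‖ψ i‖ ^ 2 / ε ^ 2 := Finset.sum_le_sum fun i _ =>
          (integral_weighted_logRatio_sq hε hn ys ψ hr i j).2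
      _ = _ := by rw [hR, ← Finset.sum_div, ← Finset.mul_sum]
  have hLint : ∀ i j, Integrable fun θ => kG d ε (θ - zs j) * L θ i := by
    intro i j
    have c1 := softWt_continuous hε hn zs i
    have c2 := softWt_continuous hε hn ys i
    refine kG_smul_integrable hε (zs j) (f := fun θ => L θ i) (by simp only [hL]; fun_prop)
      (C := 1) fun θ => ?_
    rw [Real.norm_of_nonneg (hL0 θ i)]
    have := softWt_le_one hε hn zs θ i
    have := softWt_le_one hε hn ys θ i
    simp only [hL]
    linarith
  have hVint : ∀ j, Integrable fun θ => kG d ε (θ - zs j) * ∑ i, L θ i * ‖ys i‖ ^ 2 := by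
    intro j
    simp_rw [Finset.mul_sum, ← mul_assoc]
    exact integrable_finsetSum _ fun i _ => (hLint i j).mul_const _
  have hV : ∑ j, ∫ θ, kG d ε (θ - zs j) * ∑ i, L θ i * ‖ys i‖ ^ 2 ≤ ((n : ℝ) + 1) / 2 * M := by
    simp_rw [Finset.mul_sum, ← mul_assoc]
    simp_rw [fun j => integral_finsetSum Finset.univ fun i _ => (hLint i j).mul_const (‖ys i‖ ^ 2),
      integral_mul_const]
    rw [Finset.sum_comm, hM, Finset.mul_sum]
    refine Finset.sum_le_sum fun i _ => ?_
    rw [← Finset.sum_mul]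
    exact mul_le_mul_of_nonneg_right (sum_integral_weighted_le hε hn ys zs i) (sq_nonneg _)
  have hpt : ∀ j θ, ‖ψ j‖ * (kG d ε (θ - zs j) *
      ‖∑ i, (softWt d ε zs θ i - softWt d ε ys θ i) • ys i‖) ≤
      β * ‖ψ j‖ ^ 2 / 2 * (kG d ε (θ - zs j) * ∑ i, L θ i * δ θ i ^ 2) +
      1 / (2 * β) * (kG d ε (θ - zs j) * ∑ i, L θ i * ‖ys i‖ ^ 2) := by
    intro j θ
    have h : ‖∑ i, (softWt d ε zs θ i - softWt d ε ys θ i) • ys i‖ ^ 2 ≤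
        (∑ i, L θ i * δ θ i ^ 2) * ∑ i, L θ i * ‖ys i‖ ^ 2 :=
      norm_sum_sub_smul_sq_le (softWt d ε zs θ) (softWt d ε ys θ) (δ θ) _ ys
        (softWt_pos hε hn zs θ) (softWt_pos hε hn ys θ) (sum_softWt hε hn zs θ)
        (sum_softWt hε hn ys θ) (log_softWt_sub hε hn ys ψ θ)
    have h1 := mul_le_of_sq_le_mul hβ0 (norm_nonneg (ψ j))
      (Finset.sum_nonneg fun i _ => mul_nonneg (hL0 θ i) (sq_nonneg (δ θ i)))
      (Finset.sum_nonneg fun i _ => mul_nonneg (hL0 θ i) (sq_nonneg ‖ys i‖)) (norm_nonneg _) h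
    have h2 := mul_le_mul_of_nonneg_left h1 (kG_pos d hε (θ - zs j)).le
    rw [mul_left_comm]
    refine h2.trans (le_of_eq ?_)
    generalize (∑ i, L θ i * δ θ i ^ 2) = G
    generalize (∑ i, L θ i * ‖ys i‖ ^ 2) = H
    ring
  have hj : ∀ j, ‖ψ j‖ * ∫ θ, kG d ε (θ - zs j) *
      ‖∑ i, (softWt d ε zs θ i - softWt d ε ys θ i) • ys i‖ ≤
      β * ‖ψ j‖ ^ 2 / 2 * (2 * R / ε ^ 2) +
      1 / (2 * β) * ∫ θ, kG d ε (θ - zs j) * ∑ i, L θ i * ‖ys i‖ ^ 2 := by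
    intro j
    have i1 := (hAint j).const_mul (β * ‖ψ j‖ ^ 2 / 2)
    have i2 := (hVint j).const_mul (1 / (2 * β))
    have := integral_mono ((kG_mul_norm_integrable hε hn ys zs ys (zs j)).const_mul ‖ψ j‖)
      (i1.add i2) (hpt j)
    simp only [Pi.add_apply] at this
    rw [integral_const_mul, integral_add i1 i2, integral_const_mul, integral_const_mul] at this
    refine this.trans ?_
    gcongr
    exact hA j
  refine (Finset.sum_le_sum fun j _ => hj j).trans ?_
  rw [Finset.sum_add_distrib, ← Finset.mul_sum, ← Finset.sum_mul, ← Finset.sum_div,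
    ← Finset.mul_sum, ← hR]
  have hn2 : ((n : ℝ) + 1) ≤ (1 + Real.sqrt n) ^ 2 := by
    nlinarith [Real.sq_sqrt (Nat.cast_nonneg n : (0 : ℝ) ≤ n), Real.sqrt_nonneg (n : ℝ)]
  calc _ ≤ β * R / 2 * (2 * R / ε ^ 2) + 1 / (2 * β) * ((1 + Real.sqrt n) ^ 2 / 2 * M) := by
        gcongr
        exact hV.trans (by gcongr)
    _ = _ := by
        rw [hβ]
        have hM2 : M = Real.sqrt M ^ 2 := (Real.sq_sqrt hM0).symm
        have hs : 0 < 1 + Real.sqrt (n : ℝ) := by positivity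
        generalize 1 + Real.sqrt (n : ℝ) = S at *
        generalize Real.sqrt M = N at *
        rw [hM2]
        field_simp
        ring

/-- The bound of `sum_weight_change_small` for large displacements, where it follows from the fact
that two averages of `ys` are never far apart. -/
theorem sum_weight_change_large (hε : 0 < ε) (hn : 1 ≤ n)
    (ys ψ : Fin n → EuclideanSpace ℝ (Fin d)) (hr : 2 * ε ^ 2 ≤ ∑ i, ‖ψ i‖ ^ 2) :
    ∑ j, ‖ψ j‖ * ∫ θ, kG d ε (θ - (ys j + ψ j)) *
        ‖∑ i, (softWt d ε (fun l => ys l + ψ l) θ i - softWt d ε ys θ i) • ys i‖ ≤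
      (1 + Real.sqrt n) * Real.sqrt (∑ i, ‖ys i‖ ^ 2) * (∑ i, ‖ψ i‖ ^ 2) / ε := by
  set R := ∑ i, ‖ψ i‖ ^ 2 with hR
  set M := ∑ i, ‖ys i‖ ^ 2 with hM
  have hR0 : 0 ≤ R := Finset.sum_nonneg fun _ _ => sq_nonneg _
  set zs : Fin n → EuclideanSpace ℝ (Fin d) := fun l => ys l + ψ l with hzs
  have hE : ∀ j, ∫ θ, kG d ε (θ - zs j) *
      ‖∑ i, (softWt d ε zs θ i - softWt d ε ys θ i) • ys i‖ ≤ Real.sqrt 2 * Real.sqrt M := by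
    intro j
    have := integral_mono (kG_mul_norm_integrable hε hn ys zs ys (zs j))
      (((kG_integrable d hε).comp_sub_right (zs j)).mul_const (Real.sqrt 2 * Real.sqrt M))
      (fun θ => by
        refine mul_le_mul_of_nonneg_left ?_ (kG_pos d hε _).le
        rw [← Real.sqrt_mul (by norm_num)]
        exact Real.le_sqrt_of_sq_le (norm_sum_sub_smul_sq_le_two _ _ ys (softWt_pos hε hn zs θ)
          (softWt_pos hε hn ys θ) (sum_softWt hε hn zs θ) (sum_softWt hε hn ys θ)))
    rwa [integral_mul_const, integral_kG_sub hε, one_mul] at this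
  have hsq : Real.sqrt 2 * ε ≤ Real.sqrt R := by
    apply Real.le_sqrt_of_sq_le
    rw [mul_pow, Real.sq_sqrt (by norm_num)]
    exact hr
  calc _ ≤ ∑ j, ‖ψ j‖ * (Real.sqrt 2 * Real.sqrt M) := Finset.sum_le_sum fun j _ =>
        mul_le_mul_of_nonneg_left (hE j) (norm_nonneg _)
    _ = (∑ j, ‖ψ j‖) * (Real.sqrt 2 * Real.sqrt M) := by rw [Finset.sum_mul]
    _ ≤ (Real.sqrt n * Real.sqrt R) * (Real.sqrt 2 * Real.sqrt M) := by
        gcongr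
        exact sum_norm_le_sqrt ψ
    _ ≤ _ := by
        rw [le_div_iff₀ hε]
        calc _ = (Real.sqrt n * Real.sqrt M * Real.sqrt R) * (Real.sqrt 2 * ε) := by ring
          _ ≤ (Real.sqrt n * Real.sqrt M * Real.sqrt R) * Real.sqrt R := by gcongr
          _ = Real.sqrt n * Real.sqrt M * R := by rw [mul_assoc, Real.mul_self_sqrt hR0]
          _ ≤ _ := by
            gcongr
            linarith

theorem norm_entGrad_sub_le (hε : 0 < ε) (hn : 1 ≤ n)
    (ys ψ : Fin n → EuclideanSpace ℝ (Fin d)) (w : EuclideanSpace ℝ (Fin d)) :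
    ‖entGrad d ε (fun l => ys l + ψ l) w - entGrad d ε ys w‖ ≤ 1 / ε ^ 2 *
      (Real.sqrt (∑ i, ‖ψ i‖ ^ 2) + ∫ θ, kG d ε (θ - w) *
        ‖∑ i, (softWt d ε (fun l => ys l + ψ l) θ i - softWt d ε ys θ i) • ys i‖) := by
  set zs : Fin n → EuclideanSpace ℝ (Fin d) := fun l => ys l + ψ l with hzs
  set r := Real.sqrt (∑ i, ‖ψ i‖ ^ 2) with hr
  have hψ : ∀ i, ‖ψ i‖ ≤ r := fun i => Real.le_sqrt_of_sq_le
    (Finset.single_le_sum (f := fun i => ‖ψ i‖ ^ 2) (fun l _ => sq_nonneg _) (Finset.mem_univ i))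
  have i1 := ((kG_integrable d hε).comp_sub_right w).mul_const r
  have i2 := kG_mul_norm_integrable hε hn ys zs ys w
  rw [entGrad_sub hε hn]
  refine (norm_integral_le_of_norm_le ((i1.add i2).const_mul (1 / ε ^ 2))
    (Filter.Eventually.of_forall fun θ => ?_)).trans (le_of_eq ?_)
  · have e : (∑ i, softWt d ε zs θ i • zs i) - ∑ i, softWt d ε ys θ i • ys i =
        (∑ i, softWt d ε zs θ i • ψ i) +
          ∑ i, (softWt d ε zs θ i - softWt d ε ys θ i) • ys i := by
      rw [← Finset.sum_sub_distrib, ← Finset.sum_add_distrib]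
      refine Finset.sum_congr rfl fun i _ => ?_
      simp only [hzs]
      module
    rw [e, norm_smul, norm_smul, Real.norm_of_nonneg (kG_pos d hε _).le,
      Real.norm_of_nonneg (by positivity : 0 ≤ 1 / ε ^ 2), Pi.add_apply, ← mul_add]
    have := (kG_pos d hε (θ - w)).le
    gcongr
    exact (norm_add_le _ _).trans
      (add_le_add (norm_sum_softWt_smul_le hε hn zs ψ hψ θ) le_rfl)
  · simp only [Pi.add_apply]
    rw [integral_const_mul, integral_add i1 i2, integral_mul_const, integral_kG_sub hε, one_mul]

theorem sum_norm_entGrad_sub_le (hε : 0 < ε) (hn : 1 ≤ n)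
    (ys ψ : Fin n → EuclideanSpace ℝ (Fin d)) :
    ∑ j, ‖entGrad d ε (fun l => ys l + ψ l) (ys j + ψ j) - entGrad d ε ys (ys j + ψ j)‖ * ‖ψ j‖ ≤
      (Real.sqrt n / ε ^ 2 + (1 + Real.sqrt n) * Real.sqrt (∑ i, ‖ys i‖ ^ 2) / ε ^ 3) *
        ∑ j, ‖ψ j‖ ^ 2 := by
  have h1 := (le_total (∑ i, ‖ψ i‖ ^ 2) (2 * ε ^ 2)).elim
    (sum_weight_change_small hε hn ys ψ) (sum_weight_change_large hε hn ys ψ)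
  have h2 := sum_norm_le_sqrt ψ
  set R := ∑ j, ‖ψ j‖ ^ 2 with hR
  have hR0 : 0 ≤ R := Finset.sum_nonneg fun _ _ => sq_nonneg _
  calc _ ≤ ∑ j, (1 / ε ^ 2 * Real.sqrt R * ‖ψ j‖ + 1 / ε ^ 2 *
        (‖ψ j‖ * ∫ θ, kG d ε (θ - (ys j + ψ j)) *
        ‖∑ i, (softWt d ε (fun l => ys l + ψ l) θ i - softWt d ε ys θ i) • ys i‖)) := by
        refine Finset.sum_le_sum fun j _ => ?_
        refine (mul_le_mul_of_nonneg_right (norm_entGrad_sub_le hε hn ys ψ (ys j + ψ j))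
          (norm_nonneg (ψ j))).trans (le_of_eq ?_)
        ring
    _ ≤ 1 / ε ^ 2 * Real.sqrt R * (Real.sqrt n * Real.sqrt R) + 1 / ε ^ 2 *
        ((1 + Real.sqrt n) * Real.sqrt (∑ i, ‖ys i‖ ^ 2) * R / ε) := by
        rw [Finset.sum_add_distrib, ← Finset.mul_sum, ← Finset.mul_sum]
        gcongr
    _ = _ := by
        rw [show 1 / ε ^ 2 * Real.sqrt R * (Real.sqrt n * Real.sqrt R)
          = 1 / ε ^ 2 * Real.sqrt n * (Real.sqrt R * Real.sqrt R) by ring, Real.mul_self_sqrt hR0]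
        field_simp

end

/-- Proposition D.4: bound on the measure-perturbation term of the
entropy gradient. -/
theorem stmt_13 (d : ℕ) (hd : 1 ≤ d) (ε : ℝ) (hε : 0 < ε) (n : ℕ) (hn : 1 ≤ n)
    (ys φs : Fin n → EuclideanSpace ℝ (Fin d))
    (m2 : ℝ) (hm2 : m2 = (1 / n : ℝ) * ∑ i, ‖ys i‖ ^ 2)
    (t : ℝ) (ht : 0 ≤ t)
    (zs : Fin n → EuclideanSpace ℝ (Fin d)) (hzs : ∀ j, zs j = ys j + t • φs j) :
    (1 / n : ℝ) * ∑ j, ‖entGrad d ε zs (zs j) - entGrad d ε ys (zs j)‖ * ‖φs j‖ ≤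
      (Real.sqrt n / ε ^ 2 + Real.sqrt (n * m2) / ε ^ 3 + n * Real.sqrt m2 / ε ^ 3) *
        t * ((1 / n : ℝ) * ∑ j, ‖φs j‖ ^ 2) := by
  have hn0 : (0 : ℝ) < n := by exact_mod_cast hn
  have hM : ∑ i, ‖ys i‖ ^ 2 = n * m2 := by
    rw [hm2]
    field_simp
  have hm0 : 0 ≤ m2 := by
    rw [hm2]
    exact mul_nonneg (by positivity) (Finset.sum_nonneg fun _ _ => sq_nonneg _)
  obtain rfl : zs = fun j => ys j + t • φs j := funext hzs
  rcases ht.eq_or_lt with rfl | htpos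
  · simp
  have h := sum_norm_entGrad_sub_le hε hn ys (fun j => t • φs j)
  simp only [norm_smul, Real.norm_of_nonneg ht, mul_pow] at h
  rw [← Finset.mul_sum, hM] at h
  have e : (1 + Real.sqrt n) * Real.sqrt (n * m2)
      = Real.sqrt (n * m2) + n * Real.sqrt m2 := by
    rw [Real.sqrt_mul hn0.le]
    linear_combination Real.sqrt m2 * Real.mul_self_sqrt hn0.le
  rw [e, add_div, ← add_assoc] at h
  set K := Real.sqrt n / ε ^ 2 + Real.sqrt (n * m2) / ε ^ 3 + n * Real.sqrt m2 / ε ^ 3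
  set S := ∑ j, ‖entGrad d ε (fun j => ys j + t • φs j) (ys j + t • φs j) -
    entGrad d ε ys (ys j + t • φs j)‖ * ‖φs j‖ with hS
  have h' : t * S ≤ t * (K * t * ∑ j, ‖φs j‖ ^ 2) := by
    calc t * S = _ := by
          rw [hS, Finset.mul_sum]
          exact Finset.sum_congr rfl fun j _ => by ring
      _ ≤ _ := h
      _ = _ := by ring
  have h2 := le_of_mul_le_mul_left h' htpos
  calc _ ≤ 1 / (n : ℝ) * (K * t * ∑ j, ‖φs j‖ ^ 2) := by gcongr
    _ = _ := by ring
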